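/- Let F and E be Galois number fields with [F : ℚ] = [E : ℚ] = p, where p is an odd prime. Then there exist infinitely many rational primes q that are inert simultaneously in F and in E, i.e., such that q·O_F is a prime ideal of O_F and q·O_E is a prime ideal of O_E. -/

import Mathlib

/-!
In a Galois number field `K` of prime degree `p`, a rational prime `q` that does not ramify either
stays inert or splits completely into `p` primes of norm `q`. Comparing `∑ q ^ (-s)` over the split
`q` with `log ζ_K(s)`, which is `log (1 / (s - 1)) + O(1)` because `ζ_K` has a simple pole at `1`,
shows that the split primes have upper Dirichlet density at most `1 / p`. If only finitely many
primes were inert in both fields, all others would ramify or split completely in one of them,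
whence `1 ≤ 1 / m + 1 / n` for the two degrees `m` and `n`. This only holds for `m = n = 2`.
-/

open Filter Topology NumberField Ideal IsDedekindDomain

section EulerProduct

variable {M R F : Type*} [CommMonoidWithZero M]

lemma setOf_forall_mem_insert_not_dvd [DecidableEq M] (U : Finset M) (Q : M) :
    {x : M | ∀ P ∈ insert Q U, ¬ P ∣ x} =
      {x | ∀ P ∈ U, ¬ P ∣ x} \ (Q * ·) '' {x | ∀ P ∈ U, ¬ P ∣ x} := by
  ext x
  simp only [Set.mem_ofPred_eq, Finset.forall_mem_insert, Set.mem_sdiff]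
  constructor
  · rintro ⟨hQx, hx⟩
    refine ⟨hx, ?_⟩
    rintro ⟨y, -, rfl⟩
    exact hQx (dvd_mul_right Q y)
  · rintro ⟨hx, hxQ⟩
    refine ⟨?_, hx⟩
    rintro ⟨y, rfl⟩
    exact hxQ ⟨y, fun P hP hPy ↦ hx P hP (hPy.mul_left Q), rfl⟩

variable [IsCancelMulZero M] [Subsingleton Mˣ]
  [NormedCommRing R] [CompleteSpace R] [FunLike F M R] [MonoidHomClass F M R] {f : F}

lemma prime_dvd_mul_iff_of_ne {P Q : M} (hP : Prime P) (hQ : Prime Q) (hPQ : P ≠ Q) {x : M} :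
    P ∣ Q * x ↔ P ∣ x := by
  have hPQ' : ¬ P ∣ Q := fun h ↦ hPQ (associated_iff_eq.mp ((hP.dvd_prime_iff_associated hQ).mp h))
  rw [hP.dvd_mul, or_iff_right hPQ']

lemma tsum_forall_mem_insert_not_dvd [DecidableEq M] (hf : Summable f) {U : Finset M} {Q : M}
    (hU : ∀ P ∈ U, Prime P) (hQ : Prime Q) (hQU : Q ∉ U) :
    ∑' x : {x : M | ∀ P ∈ insert Q U, ¬ P ∣ x}, f x =
      (1 - f Q) * ∑' x : {x : M | ∀ P ∈ U, ¬ P ∣ x}, f x := by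
  rw [setOf_forall_mem_insert_not_dvd]
  generalize hA : {x : M | ∀ P ∈ U, ¬ P ∣ x} = A
  have hsub : (Q * ·) '' A ⊆ A := by
    subst hA
    rintro _ ⟨y, hy, rfl⟩ P hP
    rw [prime_dvd_mul_iff_of_ne (hU P hP) hQ (ne_of_mem_of_not_mem hP hQU)]
    exact hy P hP
  have himage : ∑' x : (Q * ·) '' A, f x = f Q * ∑' x : A, f x := by
    rw [tsum_image f (mul_right_injective₀ hQ.ne_zero).injOn]
    simp only [map_mul]
    exact (hf.subtype A).tsum_mul_left _
  have hsplit : ∑' x : (A \ (Q * ·) '' A : Set M), f x + ∑' x : (Q * ·) '' A, f x =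
      ∑' x : A, f x := by
    rw [← Summable.tsum_union_disjoint Set.disjoint_sdiff_left (hf.subtype _) (hf.subtype _),
      Set.sdiff_union_of_subset hsub]
  rw [sub_mul, one_mul, ← himage, ← hsplit, add_sub_cancel_right]

lemma prod_one_sub_mul_tsum (hf : Summable f) (U : Finset M) (hU : ∀ P ∈ U, Prime P) :
    (∏ P ∈ U, (1 - f P)) * ∑' x, f x = ∑' x : {x : M | ∀ P ∈ U, ¬ P ∣ x}, f x := by
  classical
  induction U using Finset.induction_on with
  | empty =>
    have hempty : {x : M | ∀ P ∈ (∅ : Finset M), ¬ P ∣ x} = Set.univ := by simp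
    rw [Finset.prod_empty, one_mul, hempty, tsum_univ]
  | insert Q U hQU ih =>
    obtain ⟨hQ, hU⟩ := (Finset.forall_mem_insert Q U _).mp hU
    rw [Finset.prod_insert hQU, mul_assoc, ih hU, tsum_forall_mem_insert_not_dvd hf hU hQ hQU]

lemma one_le_prod_one_sub_mul_tsum [FunLike F M ℝ] [MonoidHomClass F M ℝ] {f : F} (hf : Summable f)
    (hf₀ : ∀ x, 0 ≤ f x) (U : Finset M) (hU : ∀ P ∈ U, Prime P) :
    1 ≤ (∏ P ∈ U, (1 - f P)) * ∑' x, f x := by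
  rw [prod_one_sub_mul_tsum hf U hU, ← map_one f]
  have h1 : (1 : M) ∈ {x : M | ∀ P ∈ U, ¬ P ∣ x} := fun P hP ↦ (hU P hP).not_dvd_one
  exact (hf.subtype _).le_tsum ⟨1, h1⟩ fun x _ ↦ hf₀ x

end EulerProduct

/-- The completely multiplicative function `n ↦ n ^ (-s)` on `ℕ`, the summand of `ζ(s)`; at `s = 0`
it would not preserve zero. -/
noncomputable def zetaSummandHom {s : ℝ} (hs : s ≠ 0) : ℕ →*₀ ℝ where
  toFun n := (n : ℝ) ^ (-s)
  map_zero' := by simp [Real.zero_rpow (neg_ne_zero.mpr hs)]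
  map_one' := by simp
  map_mul' m n := by simp [Real.mul_rpow]

lemma zetaSummandHom_apply {s : ℝ} (hs : s ≠ 0) (n : ℕ) : zetaSummandHom hs n = (n : ℝ) ^ (-s) :=
  rfl

section NumberField

variable {K : Type*} [Field K] [NumberField K] {s : ℝ}

variable (K) in
lemma LSeriesSummable_card_absNorm_eq (hs : 1 < s) :
    LSeriesSummable (fun n ↦ Nat.card {I : Ideal (𝓞 K) // absNorm I = n}) s := by
  obtain ⟨t, ht, -, hts⟩ : ∃ t : ℝ, dedekindZeta K t ≠ 0 ∧ 1 < t ∧ t < s := by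
    have hζ := (tendsto_sub_one_mul_dedekindZeta_nhdsGT K).eventually_ne
      (Complex.ofReal_ne_zero.mpr (dedekindZeta_residue_ne_zero K))
    exact ((hζ.mono fun t ↦ right_ne_zero_of_mul).and (Ioo_mem_nhdsGT hs)).exists
  have hsum : LSeriesSummable (fun n ↦ Nat.card {I : Ideal (𝓞 K) // absNorm I = n}) t := by
    by_contra h
    -- A divergent `tsum` is `0`, whereas `ζ_K` has a nonzero residue at `1`.
    exact ht (tsum_eq_zero_of_not_summable h)
  exact hsum.of_re_le_re (by simpa using hts.le)

lemma hasSum_absNorm_rpow_fiber (n : ℕ) :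
    HasSum (fun I : {I : Ideal (𝓞 K) // absNorm I = n} ↦ (absNorm I.1 : ℝ) ^ (-s))
      (Nat.card {I : Ideal (𝓞 K) // absNorm I = n} * (n : ℝ) ^ (-s)) := by
  have : Finite {I : Ideal (𝓞 K) // absNorm I = n} := finite_setOfPred_absNorm_eq n
  simp_rw [fun I : {I : Ideal (𝓞 K) // absNorm I = n} ↦ I.2]
  rw [← nsmul_eq_mul, ← tsum_const]
  exact Summable.of_finite.hasSum

variable (K) in
lemma hasSum_absNorm_rpow (hs : 1 < s) :
    HasSum (fun I : Ideal (𝓞 K) ↦ (absNorm I : ℝ) ^ (-s)) (dedekindZeta K s).re := by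
  have hterm (n : ℕ) : (LSeries.term
      (fun n ↦ (Nat.card {I : Ideal (𝓞 K) // absNorm I = n} : ℂ)) s n).re =
      Nat.card {I : Ideal (𝓞 K) // absNorm I = n} * (n : ℝ) ^ (-s) := by
    rw [LSeries.term_of_ne_zero' (mod_cast (zero_lt_one.trans hs).ne'), ← Complex.ofReal_natCast n,
      ← Complex.ofReal_cpow n.cast_nonneg, ← Complex.ofReal_natCast, ← Complex.ofReal_div,
      Complex.ofReal_re, Real.rpow_neg n.cast_nonneg, div_eq_mul_inv]
  have hζ := Complex.hasSum_re (LSeriesSummable_card_absNorm_eq K hs).hasSum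
  simp_rw [hterm] at hζ
  have hfiber (n : ℕ) := hasSum_absNorm_rpow_fiber (K := K) (s := s) n
  rw [← (Equiv.sigmaFiberEquiv absNorm).hasSum_iff]
  refine hζ.sigma_of_hasSum hfiber ((summable_sigma_of_nonneg fun _ ↦ ?_).mpr ⟨?_, ?_⟩)
  · exact Real.rpow_nonneg (Nat.cast_nonneg _) _
  · exact fun n ↦ (hfiber n).summable
  · exact hζ.summable.congr fun n ↦ (hfiber n).tsum_eq.symm

lemma prod_one_sub_absNorm_rpow_le_exp (T : Finset (HeightOneSpectrum (𝓞 K))) (hs : 0 ≤ s) :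
    ∏ P ∈ T, (1 - (absNorm P.asIdeal : ℝ) ^ (-s)) ≤
      Real.exp (-∑ P ∈ T, (absNorm P.asIdeal : ℝ) ^ (-s)) := by
  rw [← Finset.sum_neg_distrib, Real.exp_sum]
  refine Finset.prod_le_prod (fun P _ ↦ ?_) fun P _ ↦ Real.one_sub_le_exp_neg _
  have hP : (1 : ℝ) ≤ absNorm P.asIdeal := by
    exact_mod_cast Nat.one_le_iff_ne_zero.mpr (absNorm_eq_zero_iff.not.mpr P.ne_bot)
  exact sub_nonneg.mpr (Real.rpow_le_one_of_one_le_of_nonpos hP (by linarith))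

lemma sum_absNorm_rpow_le_log_dedekindZeta (hs : 1 < s) (T : Finset (HeightOneSpectrum (𝓞 K))) :
    ∑ P ∈ T, (absNorm P.asIdeal : ℝ) ^ (-s) ≤ Real.log (dedekindZeta K s).re := by
  classical
  have hs₀ : 0 < s := zero_lt_one.trans hs
  have hζ := hasSum_absNorm_rpow K hs
  have hζ₀ : 0 ≤ (dedekindZeta K s).re := hζ.nonneg fun I ↦ by positivity
  have hinj : Function.Injective (HeightOneSpectrum.asIdeal (R := 𝓞 K)) :=
    fun _ _ ↦ HeightOneSpectrum.ext
  have heuler : 1 ≤ (∏ P ∈ T, (1 - (absNorm P.asIdeal : ℝ) ^ (-s))) * (dedekindZeta K s).re := by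
    rw [← hζ.tsum_eq, ← Finset.prod_image (f := fun I : Ideal (𝓞 K) ↦ 1 - (absNorm I : ℝ) ^ (-s))
      hinj.injOn]
    refine one_le_prod_one_sub_mul_tsum (f := (zetaSummandHom hs₀.ne').comp absNorm)
      hζ.summable (fun I ↦ by exact Real.rpow_nonneg (Nat.cast_nonneg _) _) _ ?_
    simp only [Finset.forall_mem_image]
    exact fun P _ ↦ P.prime
  have hexp := heuler.trans
    (mul_le_mul_of_nonneg_right (prod_one_sub_absNorm_rpow_le_exp T hs₀.le) hζ₀)
  have hζ₁ : 0 < (dedekindZeta K s).re :=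
    pos_of_mul_pos_right (zero_lt_one.trans_le hexp) (Real.exp_pos _).le
  rwa [Real.le_log_iff_exp_le hζ₁, ← one_le_div (Real.exp_pos _), div_eq_mul_inv, mul_comm,
    ← Real.exp_neg]

variable (K) in
lemma summable_absNorm_rpow_heightOneSpectrum (hs : 1 < s) :
    Summable fun P : HeightOneSpectrum (𝓞 K) ↦ (absNorm P.asIdeal : ℝ) ^ (-s) :=
  (hasSum_absNorm_rpow K hs).summable.comp_injective fun _ _ ↦ HeightOneSpectrum.ext

variable (K) in
lemma primeIdealZetaSum_univ_le_log_dedekindZeta (hs : 1 < s) :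
    Set.primeIdealZetaSum (Set.univ : Set (HeightOneSpectrum (𝓞 K))) s ≤
      Real.log (dedekindZeta K s).re := by
  rw [Set.primeIdealZetaSum_def,
    tsum_univ fun P : HeightOneSpectrum (𝓞 K) ↦ (absNorm P.asIdeal : ℝ) ^ (-s)]
  exact (summable_absNorm_rpow_heightOneSpectrum K hs).tsum_le_of_sum_le
    (sum_absNorm_rpow_le_log_dedekindZeta hs)

variable (K) in
lemma tendsto_sub_one_mul_re_dedekindZeta :
    Tendsto (fun s : ℝ ↦ (s - 1) * (dedekindZeta K s).re) (𝓝[>] 1)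
      (𝓝 (dedekindZeta_residue K)) := by
  refine ((Complex.continuous_re.tendsto _).comp
    (tendsto_sub_one_mul_dedekindZeta_nhdsGT K)).congr fun s ↦ ?_
  rw [Function.comp_apply, ← Complex.ofReal_one, ← Complex.ofReal_sub, Complex.re_ofReal_mul]

variable (K) in
lemma isBoundedUnder_le_primeIdealZetaSum_univ_add_log :
    (𝓝[>] 1).IsBoundedUnder (· ≤ ·) fun s : ℝ ↦
      Set.primeIdealZetaSum (Set.univ : Set (HeightOneSpectrum (𝓞 K))) s + Real.log (s - 1) := by
  have hζ := tendsto_sub_one_mul_re_dedekindZeta K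
  have hlog := hζ.log (dedekindZeta_residue_ne_zero K)
  refine hlog.isBoundedUnder_le.mono_le ?_
  filter_upwards [self_mem_nhdsWithin, hζ.eventually_ne (dedekindZeta_residue_ne_zero K)]
    with s hs hζs
  rw [Real.log_mul (left_ne_zero_of_mul hζs) (right_ne_zero_of_mul hζs), add_comm]
  grw [primeIdealZetaSum_univ_le_log_dedekindZeta K hs]

end NumberField

section RiemannZeta

lemma inv_one_sub_le_exp {x : ℝ} (hx : x ≤ 1 / 2) :
    (1 - x)⁻¹ ≤ Real.exp (x + 2 * x ^ 2) := by
  refine le_trans ?_ (Real.add_one_le_exp _)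
  rw [inv_le_iff_one_le_mul₀ (by linarith)]
  nlinarith [mul_nonneg (sq_nonneg x) (by linarith : 0 ≤ 1 - 2 * x)]

lemma inv_one_sub_rpow_neg_le_exp {x s : ℝ} (hx : 2 ≤ x) (hs : 1 ≤ s) :
    (1 - x ^ (-s))⁻¹ ≤ Real.exp (x ^ (-s) + 2 * (1 / x ^ 2)) := by
  have hle : x ^ (-s) ≤ 1 / x := by
    rw [one_div, ← Real.rpow_neg_one]
    exact Real.rpow_le_rpow_of_exponent_le (by linarith) (by linarith)
  have hsq : (x ^ (-s)) ^ 2 ≤ 1 / x ^ 2 := by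
    rw [← one_div_pow]
    gcongr
  refine (inv_one_sub_le_exp (hle.trans (by gcongr))).trans ?_
  gcongr

lemma tsum_nat_rpow_le_exp {s : ℝ} (hs : 1 < s) :
    ∑' n : ℕ, 1 / (n : ℝ) ^ s ≤
      Real.exp (∑' q : Nat.Primes, (q : ℝ) ^ (-s) + 2 * ∑' q : Nat.Primes, 1 / (q : ℝ) ^ 2) := by
  have hsum : Summable fun n : ℕ ↦ (n : ℝ) ^ (-s) := Real.summable_nat_rpow.mpr (by linarith)
  have hsq : Summable fun n : ℕ ↦ 1 / (n : ℝ) ^ 2 := Real.summable_one_div_nat_pow.mpr one_lt_two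
  have hprod := EulerProduct.eulerProduct_completely_multiplicative_hasProd
    (f := zetaSummandHom (zero_lt_one.trans hs).ne') hsum.norm
  have hζ (n : ℕ) : 1 / (n : ℝ) ^ s = zetaSummandHom (zero_lt_one.trans hs).ne' n := by
    rw [zetaSummandHom_apply, Real.rpow_neg n.cast_nonneg, one_div]
  simp_rw [hζ]
  refine le_of_tendsto' hprod fun T ↦ ?_
  have hT : ∏ q ∈ T, (1 - (q : ℝ) ^ (-s))⁻¹ ≤
      Real.exp (∑ q ∈ T, ((q : ℝ) ^ (-s) + 2 * (1 / (q : ℝ) ^ 2))) := by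
    rw [Real.exp_sum]
    refine Finset.prod_le_prod (fun q _ ↦ ?_) fun q _ ↦ ?_
    · exact inv_nonneg.mpr (sub_nonneg.mpr (Real.rpow_le_one_of_one_le_of_nonpos
        (mod_cast q.2.one_le) (by linarith)))
    · exact inv_one_sub_rpow_neg_le_exp (mod_cast q.2.two_le) hs.le
  refine hT.trans (Real.exp_le_exp.mpr ?_)
  rw [Finset.sum_add_distrib, ← Finset.mul_sum]
  gcongr
  · exact (hsum.comp_injective Subtype.val_injective).sum_le_tsum T fun _ _ ↦ by positivity
  · exact (hsq.comp_injective Subtype.val_injective).sum_le_tsum T fun _ _ ↦ by positivity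

end RiemannZeta

lemma mul_tsum_le_tsum_of_le_card_fiber {α β : Type*} {g : α → β} {f : β → ℝ}
    (hf : ∀ b, 0 ≤ f b) (hfg : Summable (f ∘ g)) (d : ℕ) :
    d * ∑' b : {b | d ≤ Nat.card {a // g a = b}}, f b ≤ ∑' a, f (g a) := by
  have hsigma := (Equiv.sigmaFiberEquiv g).summable_iff.mpr hfg
  have hfiber (b : β) : ∑' a : {a // g a = b}, f (g (Equiv.sigmaFiberEquiv g ⟨b, a⟩)) =
      Nat.card {a // g a = b} * f b := by
    simp_rw [Equiv.sigmaFiberEquiv_apply, fun a : {a // g a = b} ↦ a.2, tsum_const, nsmul_eq_mul]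
  have hcard : Summable fun b ↦ Nat.card {a // g a = b} * f b :=
    hsigma.sigma.congr hfiber
  have hle (b : {b | d ≤ Nat.card {a // g a = b}}) : d * f b ≤ Nat.card {a // g a = b} * f b :=
    mul_le_mul_of_nonneg_right (mod_cast b.2) (hf b)
  calc d * ∑' b : {b | d ≤ Nat.card {a // g a = b}}, f b
      = ∑' b : {b | d ≤ Nat.card {a // g a = b}}, d * f b := tsum_mul_left.symm
    _ ≤ ∑' b : {b | d ≤ Nat.card {a // g a = b}}, Nat.card {a // g a = b} * f b :=
      Summable.tsum_le_tsum hle ((hcard.subtype _).of_nonneg_of_le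
        (fun b ↦ mul_nonneg d.cast_nonneg (hf b)) hle) (hcard.subtype _)
    _ ≤ ∑' b, Nat.card {a // g a = b} * f b :=
      hcard.tsum_subtype_le _ _ fun b ↦ mul_nonneg (Nat.cast_nonneg _) (hf b)
    _ = ∑' a, f (g a) := by
      rw [← (Equiv.sigmaFiberEquiv g).tsum_eq]
      refine Eq.trans ?_ hsigma.tsum_sigma.symm
      exact tsum_congr fun b ↦ (hfiber b).symm

lemma summable_subtype_rpow_neg (A : Set ℕ) {s : ℝ} (hs : 1 < s) :
    Summable fun n : A ↦ (n : ℝ) ^ (-s) :=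
  (Real.summable_nat_rpow.mpr (neg_lt_neg hs)).subtype A

/-- `A` has upper Dirichlet density at most `c`, in the strong form
`∑ n ∈ A, n ^ (-s) ≤ c * log (1 / (s - 1)) + O(1)` as `s → 1⁺`. The density of the set of all primes
is normalized to be `1`. -/
def DirichletUpperDensityLE (A : Set ℕ) (c : ℝ) : Prop :=
  (𝓝[>] 1).IsBoundedUnder (· ≤ ·) fun s : ℝ ↦ ∑' n : A, (n : ℝ) ^ (-s) + c * Real.log (s - 1)

namespace DirichletUpperDensityLE

variable {A B : Set ℕ} {a b c : ℝ}

lemma mono (hAB : A ⊆ B) (hB : DirichletUpperDensityLE B c) : DirichletUpperDensityLE A c := by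
  refine IsBoundedUnder.mono_le hB ?_
  filter_upwards [self_mem_nhdsWithin] with s hs
  gcongr
  refine (summable_subtype_rpow_neg A hs).tsum_le_tsum_of_inj _ (Set.inclusion_injective hAB) ?_ ?_
    (summable_subtype_rpow_neg B hs)
  · exact fun n _ ↦ Real.rpow_nonneg n.1.cast_nonneg _
  · exact fun n ↦ le_rfl

lemma union (hA : DirichletUpperDensityLE A a) (hB : DirichletUpperDensityLE B b) :
    DirichletUpperDensityLE (A ∪ B) (a + b) := by
  refine (isBoundedUnder_le_add hA (hB.mono (Set.sdiff_subset (t := A)))).mono_le ?_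
  filter_upwards [self_mem_nhdsWithin] with s hs
  rw [← Set.union_sdiff_self, Summable.tsum_union_disjoint
    (f := fun n : ℕ ↦ (n : ℝ) ^ (-s)) Set.disjoint_sdiff_right
    (summable_subtype_rpow_neg _ hs) (summable_subtype_rpow_neg _ hs), Pi.add_apply]
  linarith

lemma of_finite (hA : A.Finite) : DirichletUpperDensityLE A 0 := by
  have := hA.fintype
  refine isBoundedUnder_of_eventually_le (a := (Fintype.card A : ℝ)) ?_
  filter_upwards [self_mem_nhdsWithin] with s hs
  have hs₀ : -s ≤ 0 := neg_nonpos.mpr (zero_le_one.trans hs.le)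
  rw [zero_mul, add_zero, tsum_fintype, ← nsmul_one, ← Finset.card_univ]
  refine Finset.sum_le_card_nsmul _ _ _ fun n _ ↦ ?_
  rcases eq_or_ne n.1 0 with hn | hn
  · rw [hn, Nat.cast_zero, Real.zero_rpow (neg_ne_zero.mpr (zero_lt_one.trans hs).ne')]
    exact zero_le_one
  · exact Real.rpow_le_one_of_one_le_of_nonpos (mod_cast Nat.one_le_iff_ne_zero.mpr hn) hs₀

lemma one_le_of_setOf_prime (h : DirichletUpperDensityLE {q | q.Prime} c) : 1 ≤ c := by
  have hζ := tendsto_sub_mul_tsum_nat_rpow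
  have hlog : Tendsto (fun s : ℝ ↦ Real.log (s - 1)) (𝓝[>] 1) atBot := by
    refine Real.tendsto_log_nhdsGT_zero.comp (tendsto_nhdsWithin_iff.mpr ⟨?_, ?_⟩)
    · exact tendsto_nhdsWithin_of_tendsto_nhds (Continuous.tendsto' (by fun_prop) _ _ (sub_self 1))
    · exact eventually_mem_nhdsWithin.mono fun s hs ↦ Set.mem_Ioi.mpr (sub_pos.mpr hs)
  obtain ⟨C, hC⟩ := h
  by_contra! hc
  refine not_isBoundedUnder_of_tendsto_atTop
    ((hlog.const_mul_atBot_of_neg (sub_neg.mpr hc)).atTop_add (hζ.log one_ne_zero)) ?_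
  refine isBoundedUnder_of_eventually_le (a := C + 2 * ∑' q : Nat.Primes, 1 / (q : ℝ) ^ 2) ?_
  filter_upwards [self_mem_nhdsWithin, hζ.eventually_const_lt one_pos, eventually_map.mp hC]
    with s hs hζs hCs
  have hs₀ : 0 < s - 1 := sub_pos.mpr hs
  have hlogζ := (Real.log_le_iff_le_exp (pos_of_mul_pos_right hζs hs₀.le)).mpr
    (tsum_nat_rpow_le_exp hs)
  change ∑' q : Nat.Primes, (q : ℝ) ^ (-s) + c * Real.log (s - 1) ≤ C at hCs
  rw [Real.log_mul hs₀.ne' (right_ne_zero_of_mul hζs.ne')]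
  linarith

lemma setOf_le_card_absNorm_eq (K : Type*) [Field K] [NumberField K] {d : ℕ} (hd : d ≠ 0) :
    DirichletUpperDensityLE
      {n | d ≤ Nat.card {P : HeightOneSpectrum (𝓞 K) // absNorm P.asIdeal = n}} (1 / d) := by
  obtain ⟨C, hC⟩ := isBoundedUnder_le_primeIdealZetaSum_univ_add_log K
  refine isBoundedUnder_of_eventually_le (a := C / d) ?_
  filter_upwards [self_mem_nhdsWithin, eventually_map.mp hC] with s hs hCs
  have hle := mul_tsum_le_tsum_of_le_card_fiber (f := fun n : ℕ ↦ (n : ℝ) ^ (-s))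
    (g := fun P : HeightOneSpectrum (𝓞 K) ↦ absNorm P.asIdeal)
    (fun n ↦ Real.rpow_nonneg n.cast_nonneg _) (summable_absNorm_rpow_heightOneSpectrum K hs) d
  rw [Set.primeIdealZetaSum_def,
    tsum_univ fun P : HeightOneSpectrum (𝓞 K) ↦ (absNorm P.asIdeal : ℝ) ^ (-s)] at hCs
  have hd₀ : (0 : ℝ) < d := by positivity
  rw [le_div_iff₀' hd₀, mul_add, ← mul_assoc, mul_one_div_cancel hd₀.ne', one_mul]
  linarith

end DirichletUpperDensityLE

section AbsNorm

variable {S : Type*} [CommRing S] [IsDedekindDomain S] [Module.Free ℤ S]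

lemma eq_of_le_of_absNorm_eq {I J : Ideal S} (hIJ : I ≤ J) (hI : absNorm I ≠ 0)
    (h : absNorm I = absNorm J) : I = J := by
  obtain ⟨L, rfl⟩ := dvd_iff_le.mpr hIJ
  rw [map_mul] at h hI
  rw [absNorm_eq_one_iff.mp ((Nat.mul_eq_left (left_ne_zero_of_mul hI)).mp h), mul_top]

lemma span_natCast_eq_of_absNorm_eq_pow_finrank [Module.Finite ℤ S] {I : Ideal S} {n : ℕ}
    (hn : n ≠ 0) (hnI : (n : S) ∈ I) (hI : absNorm I = n ^ Module.finrank ℤ S) :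
    span {(n : S)} = I := by
  have hspan := absNorm_span_natCast (S := S) n
  exact eq_of_le_of_absNorm_eq ((span_singleton_le_iff_mem _).mpr hnI)
    (hspan ▸ pow_ne_zero _ hn) (hspan.trans hI.symm)

end AbsNorm

lemma isPrime_span_natCast_int {q : ℕ} (hq : q.Prime) : (span {(q : ℤ)}).IsPrime :=
  (span_singleton_prime (mod_cast hq.ne_zero)).mpr (Nat.prime_iff_prime_int.mp hq)

section PrimeDegree

variable {K : Type*} [Field K] [NumberField K] {q : ℕ}

variable (K) in
lemma finite_setOf_natCast_dvd_discr : {n : ℕ | (n : ℤ) ∣ discr K}.Finite := by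
  refine (discr K).natAbs.divisors.finite_toSet.subset fun n hn ↦ ?_
  exact Nat.mem_divisors.mpr ⟨Int.natCast_dvd.mp hn, Int.natAbs_ne_zero.mpr (discr_ne_zero K)⟩

variable [IsGalois ℚ K]

lemma absNorm_eq_pow_inertiaDegIn (P : Ideal (𝓞 K)) [P.IsPrime] [P.LiesOver (span {(q : ℤ)})] :
    absNorm P = q ^ (span {(q : ℤ)}).inertiaDegIn (𝓞 K) := by
  rw [inertiaDegIn_eq_inertiaDeg _ P Gal(K/ℚ), ← natAbs_pow_inertiaDeg (q : ℤ) P,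
    Int.natAbs_natCast]

lemma ncard_primesOver_mul_inertiaDegIn_of_not_dvd_discr (hq : q.Prime)
    (hd : ¬ (q : ℤ) ∣ discr K) :
    (primesOver (span {(q : ℤ)}) (𝓞 K)).ncard * (span {(q : ℤ)}).inertiaDegIn (𝓞 K) =
      Module.finrank ℚ K := by
  have hqZ := Nat.prime_iff_prime_int.mp hq
  have hprime := isPrime_span_natCast_int hq
  have := hprime.isMaximal (span_singleton_eq_bot.not.mpr hqZ.ne_zero)
  have hunr := (not_dvd_discr_iff_isUnramifiedIn K (𝓞 K) hqZ).mp hd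
  obtain ⟨P, hP, hPq⟩ : Nonempty (primesOver (span {(q : ℤ)}) (𝓞 K)) := inferInstance
  have he : (span {(q : ℤ)}).ramificationIdxIn (𝓞 K) = 1 := by
    rw [ramificationIdxIn_eq_ramificationIdx _ P Gal(K/ℚ)]
    exact hunr.ramificationIdx_eq_one hPq
  have hefg := ncard_primesOver_mul_ramificationIdxIn_mul_inertiaDegIn (span {(q : ℤ)}) (𝓞 K)
    Gal(K/ℚ)
  rwa [he, one_mul, IsGalois.card_aut_eq_finrank] at hefg

lemma ncard_primesOver_le_card_absNorm_eq (hq : q ≠ 0)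
    (hf : (span {(q : ℤ)}).inertiaDegIn (𝓞 K) = 1) :
    (primesOver (span {(q : ℤ)}) (𝓞 K)).ncard ≤
      Nat.card {P : HeightOneSpectrum (𝓞 K) // absNorm P.asIdeal = q} := by
  have hnorm (P : primesOver (span {(q : ℤ)}) (𝓞 K)) : absNorm P.1 = q := by
    obtain ⟨P, hP, hPq⟩ := P
    rw [absNorm_eq_pow_inertiaDegIn (q := q) P, hf, pow_one]
  have hne (P : primesOver (span {(q : ℤ)}) (𝓞 K)) : P.1 ≠ ⊥ :=
    absNorm_eq_zero_iff.not.mp ((hnorm P).trans_ne hq)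
  have : Finite {P : HeightOneSpectrum (𝓞 K) // absNorm P.asIdeal = q} :=
    (finite_setOfPred_absNorm_eq q).preimage
      (Function.Injective.injOn fun _ _ ↦ HeightOneSpectrum.ext)
  rw [← Nat.card_coe_set_eq]
  refine Nat.card_le_card_of_injective (fun P ↦ ⟨⟨P.1, P.2.1, hne P⟩, hnorm P⟩) fun P Q h ↦ ?_
  exact Subtype.ext (congrArg (fun R ↦ R.1.asIdeal) h)

lemma isPrime_span_or_finrank_le_card_absNorm_eq (hK : (Module.finrank ℚ K).Prime) (hq : q.Prime)
    (hd : ¬ (q : ℤ) ∣ discr K) :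
    (span {(q : 𝓞 K)}).IsPrime ∨
      Module.finrank ℚ K ≤ Nat.card {P : HeightOneSpectrum (𝓞 K) // absNorm P.asIdeal = q} := by
  have hfg := ncard_primesOver_mul_inertiaDegIn_of_not_dvd_discr hq hd
  rcases (Nat.dvd_prime hK).mp (Dvd.intro_left _ hfg) with hf | hf
  · right
    rw [← hfg, hf, mul_one]
    exact ncard_primesOver_le_card_absNorm_eq hq.ne_zero hf
  · left
    have hprime := isPrime_span_natCast_int hq
    obtain ⟨P, hP, hPq⟩ : Nonempty (primesOver (span {(q : ℤ)}) (𝓞 K)) := inferInstance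
    have hqP : (q : 𝓞 K) ∈ P := by
      simpa using (mem_of_liesOver P (span {(q : ℤ)}) q).mp (mem_span_singleton_self _)
    have hnorm : absNorm P = q ^ Module.finrank ℤ (𝓞 K) := by
      rw [absNorm_eq_pow_inertiaDegIn (q := q) P, hf, RingOfIntegers.rank]
    rwa [span_natCast_eq_of_absNorm_eq_pow_finrank hq.ne_zero hqP hnorm]

end PrimeDegree

section Inert

lemma dirichletUpperDensityLE_setOf_prime_not_isPrime_span {K : Type*} [Field K] [NumberField K]
    [IsGalois ℚ K] (hK : (Module.finrank ℚ K).Prime) :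
    DirichletUpperDensityLE {q | q.Prime ∧ ¬ (span {(q : 𝓞 K)}).IsPrime}
      (1 / Module.finrank ℚ K) := by
  rw [← zero_add (1 / _)]
  refine ((DirichletUpperDensityLE.of_finite (finite_setOf_natCast_dvd_discr K)).union
    (.setOf_le_card_absNorm_eq K hK.ne_zero)).mono ?_
  rintro q ⟨hq, hinert⟩
  rw [Set.mem_union, or_iff_not_imp_left]
  exact fun hd ↦ (isPrime_span_or_finrank_le_card_absNorm_eq hK hq hd).resolve_left hinert

lemma one_div_add_one_div_lt_one {m n : ℕ} (hm : 2 ≤ m) (hn : 2 ≤ n) (hmn : m ≠ 2 ∨ n ≠ 2) :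
    (1 / m + 1 / n : ℝ) < 1 := by
  rw [div_add_div _ _ (by positivity) (by positivity), div_lt_one (by positivity)]
  norm_cast
  rcases hmn with h | h
  · nlinarith [show 3 ≤ m by lia]
  · nlinarith [show 3 ≤ n by lia]

end Inert

theorem infinite_primes_inert_in_both_general {F E : Type*}
    [Field F] [NumberField F] [IsGalois ℚ F]
    [Field E] [NumberField E] [IsGalois ℚ E]
    (hF : (Module.finrank ℚ F).Prime) (hE : (Module.finrank ℚ E).Prime)
    (hFE : Module.finrank ℚ F ≠ 2 ∨ Module.finrank ℚ E ≠ 2) :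
    {q : ℕ | q.Prime ∧ (span {(q : 𝓞 F)}).IsPrime ∧ (span {(q : 𝓞 E)}).IsPrime}.Infinite := by
  intro hfinite
  have hcover := ((DirichletUpperDensityLE.of_finite hfinite).union
    (dirichletUpperDensityLE_setOf_prime_not_isPrime_span hF)).union
    (dirichletUpperDensityLE_setOf_prime_not_isPrime_span hE)
  have hone := (hcover.mono (A := {q | q.Prime}) ?_).one_le_of_setOf_prime
  · linarith [one_div_add_one_div_lt_one hF.two_le hE.two_le hFE]
  · intro q hq
    simp only [Set.mem_union, Set.mem_ofPred_eq] at hq ⊢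
    tauto

/-- If `F` and `E` are Galois number fields of the same odd prime degree `p`
over `ℚ`, then there are infinitely many rational primes `q` that are inert in both `F`
and `E`, i.e. such that `q·O_F` and `q·O_E` are prime ideals. -/
theorem infinite_primes_inert_in_both {F E : Type*}
    [Field F] [NumberField F] [IsGalois ℚ F]
    [Field E] [NumberField E] [IsGalois ℚ E]
    (p : ℕ) (hp : p.Prime) (hodd : Odd p)
    (hF : Module.finrank ℚ F = p) (hE : Module.finrank ℚ E = p) :
    {q : ℕ | q.Prime ∧ (Ideal.span {(q : NumberField.RingOfIntegers F)}).IsPrime ∧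
      (Ideal.span {(q : NumberField.RingOfIntegers E)}).IsPrime}.Infinite :=
  infinite_primes_inert_in_both_general (hF ▸ hp) (hE ▸ hp)
    (.inl (hF ▸ hodd.ne_two_of_dvd_nat dvd_rfl))
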